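/- arXiv:2410.00554 — 3 statements merged into one kernel-verified Lean document; each statement's English description precedes it below -/
import Mathlib

section
/- Let d ≥ 2, k ≥ 2, let S_k be the cyclic-shift unitary on (ℂ^d)^{⊗k} with S_k(v_1 ⊗ ⋯ ⊗ v_k) = v_k ⊗ v_1 ⊗ ⋯ ⊗ v_{k-1}, and D_k = (I + S_k)/2. Then for every Hermitian d×d matrix σ with tr(σ) = 1, the partial trace over the last k−1 tensor factors of D_k σ^{⊗k} D_k† equals (σ + σ^k)/2. -/
open Matrix Kronecker BigOperators

noncomputable section

/-- The cyclically previous index: `m - 1 (mod k)`. -/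
def prevIdx {k : ℕ} (m : Fin k) : Fin k :=
  ⟨(m.val + (k - 1)) % k, Nat.mod_lt _ m.pos⟩

/-- The cyclic-shift unitary `S_k` on `(ℂ^d)^{⊗k}`, determined by
`S_k (v_1 ⊗ ⋯ ⊗ v_k) = v_k ⊗ v_1 ⊗ ⋯ ⊗ v_{k-1}`, written as a matrix in the
standard tensor-product basis indexed by functions `Fin k → Fin d`. -/
def cyc (d k : ℕ) : Matrix (Fin k → Fin d) (Fin k → Fin d) ℂ :=
  fun g f => if g = fun m => f (prevIdx m) then 1 else 0

/-- The SWAP projection `D_k = (I + S_k)/2`. -/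
def Dk (d k : ℕ) : Matrix (Fin k → Fin d) (Fin k → Fin d) ℂ :=
  (1 / 2 : ℂ) • (1 + cyc d k)

/-- The tensor product `A_1 ⊗ A_2 ⊗ ⋯ ⊗ A_k` of `d × d` matrices, acting
factor-wise on `(ℂ^d)^{⊗k}`. -/
def tensOp {d k : ℕ} (A : Fin k → Matrix (Fin d) (Fin d) ℂ) :
    Matrix (Fin k → Fin d) (Fin k → Fin d) ℂ :=
  fun g f => ∏ m, A m (g m) (f m)

/-- The tensor product `v_1 ⊗ ⋯ ⊗ v_k` of vectors in `ℂ^d`. -/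
def tensVec {d k : ℕ} (v : Fin k → (Fin d → ℂ)) : (Fin k → Fin d) → ℂ :=
  fun f => ∏ m, v m (f m)

/-- The partial trace over the last `k - 1` tensor factors, mapping matrices on
`(ℂ^d)^{⊗k}` to `d × d` matrices by tracing out factors `2` through `k`. -/
def ptraceFirst {d k : ℕ} (M : Matrix (Fin k → Fin d) (Fin k → Fin d) ℂ) :
    Matrix (Fin d) (Fin d) ℂ :=
  fun a b => ∑ r : {i : Fin k // i.val ≠ 0} → Fin d,
    M (fun m => if h : m.val = 0 then a else r ⟨m, h⟩)
      (fun m => if h : m.val = 0 then b else r ⟨m, h⟩)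

/-!
The shift `S` permutes the standard basis. Conjugating `A₁ ⊗ ⋯ ⊗ Aₖ` by `S` therefore only permutes
its factors, so `σ^{⊗k}` and `S σ^{⊗k} S†` have the same partial trace `(tr σ)^{k-1} σ`. In
`(A₁ ⊗ ⋯ ⊗ Aₖ) S†` the column index of each factor is the row index of the next, hence tracing out
all but the first factor sums over paths and gives the matrix product `A₁ ⋯ Aₖ`. Taking adjoints,
`S (A₁ ⊗ ⋯ ⊗ Aₖ)` gives `Aₖ ⋯ A₁`. For equal factors both products are `σ^k`, and each of the two
values occurs twice in the expansion of `D σ^{⊗k} D†`.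
-/

section MatrixPaths

variable {ι R : Type*} [Fintype ι] [DecidableEq ι] [CommSemiring R]

theorem list_ofFn_prod_apply_eq_sum_prod {n : ℕ} (A : Fin (n + 1) → Matrix ι ι R) (a b : ι) :
    (List.ofFn A).prod a b =
      ∑ r : Fin n → ι, ∏ m,
        A m ((Fin.cons a r : Fin (n + 1) → ι) m) ((Fin.snoc r b : Fin (n + 1) → ι) m) := by
  induction n generalizing a with
  | zero => simp [Fin.snoc]
  | succ n ih =>
    rw [List.ofFn_succ, List.prod_cons, Matrix.mul_apply,
      ← (Fin.consEquiv fun _ : Fin (n + 1) ↦ ι).sum_comp, Fintype.sum_prod_type]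
    refine Finset.sum_congr rfl fun c _ ↦ ?_
    rw [ih, Finset.mul_sum]
    refine Finset.sum_congr rfl fun r _ ↦ ?_
    change _ = ∏ m, A m ((Fin.cons a (Fin.cons c r : Fin (n + 1) → ι) : Fin (n + 2) → ι) m)
      ((Fin.snoc (Fin.cons c r : Fin (n + 1) → ι) b : Fin (n + 2) → ι) m)
    simp only [← Fin.cons_snoc_eq_snoc_cons, Fin.prod_univ_succ (n := n + 1), Fin.cons_zero,
      Fin.cons_succ]

end MatrixPaths

section CyclicShift

variable {d k : ℕ}

theorem prevIdx_eq_finRotate_symm (m : Fin k) : prevIdx m = (finRotate k).symm m := by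
  obtain _ | n := k
  · exact m.elim0
  rw [Equiv.eq_symm_apply, finRotate_apply]
  ext
  simp only [prevIdx, Fin.val_add]
  simp [add_assoc, Nat.mod_eq_of_lt m.isLt]

theorem cyc_eq_permMatrix (d k : ℕ) :
    cyc d k = Equiv.Perm.permMatrix ℂ ((finRotate k).symm.arrowCongr (Equiv.refl (Fin d))) := by
  ext g f
  have rotate_iff : (g = fun m ↦ f (prevIdx m)) ↔ f = g ∘ finRotate k := by
    simp only [prevIdx_eq_finRotate_symm]
    exact (Equiv.eq_comp_symm _ _ _).trans eq_comm
  simp only [cyc, rotate_iff, PEquiv.toMatrix_toPEquiv_apply, Pi.single_apply]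
  rfl

theorem cyc_mul (M : Matrix (Fin k → Fin d) (Fin k → Fin d) ℂ) :
    cyc d k * M = M.submatrix (· ∘ finRotate k) id := by
  rw [cyc_eq_permMatrix, PEquiv.toMatrix_toPEquiv_mul]
  rfl

theorem mul_conjTranspose_cyc (M : Matrix (Fin k → Fin d) (Fin k → Fin d) ℂ) :
    M * (cyc d k)ᴴ = M.submatrix id (· ∘ finRotate k) := by
  rw [cyc_eq_permMatrix, conjTranspose_permMatrix, PEquiv.mul_toMatrix_toPEquiv]
  rfl

theorem Dk_mul_mul_conjTranspose_Dk (M : Matrix (Fin k → Fin d) (Fin k → Fin d) ℂ) :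
    Dk d k * M * (Dk d k)ᴴ =
      (1 / 4 : ℂ) • (M + cyc d k * M + M * (cyc d k)ᴴ + cyc d k * M * (cyc d k)ᴴ) := by
  have star_half : star (1 / 2 : ℂ) = 1 / 2 := by simp
  simp only [Dk, conjTranspose_smul, conjTranspose_add, conjTranspose_one, star_half,
    Matrix.smul_mul, Matrix.mul_smul, add_mul, mul_add, one_mul, mul_one]
  module

end CyclicShift

section TensorProduct

variable {d k : ℕ} (A : Fin k → Matrix (Fin d) (Fin d) ℂ)

theorem conjTranspose_tensOp : (tensOp A)ᴴ = tensOp fun m ↦ (A m)ᴴ := by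
  ext g f
  simp [tensOp]

theorem cyc_mul_tensOp_mul_conjTranspose_cyc :
    cyc d k * tensOp A * (cyc d k)ᴴ = tensOp (A ∘ (finRotate k).symm) := by
  ext g f
  simp only [cyc_mul, mul_conjTranspose_cyc, submatrix_apply, id, tensOp]
  rw [← (finRotate k).symm.prod_comp]
  simp only [Function.comp_apply, Equiv.apply_symm_apply]

end TensorProduct

section PartialTrace

variable {d k n : ℕ}

theorem ptraceFirst_add (M N : Matrix (Fin k → Fin d) (Fin k → Fin d) ℂ) :
    ptraceFirst (M + N) = ptraceFirst M + ptraceFirst N := by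
  ext a b
  simp [ptraceFirst, Finset.sum_add_distrib]

theorem ptraceFirst_smul (c : ℂ) (M : Matrix (Fin k → Fin d) (Fin k → Fin d) ℂ) :
    ptraceFirst (c • M) = c • ptraceFirst M := by
  ext a b
  simp [ptraceFirst, Finset.mul_sum]

theorem ptraceFirst_conjTranspose (M : Matrix (Fin k → Fin d) (Fin k → Fin d) ℂ) :
    ptraceFirst Mᴴ = (ptraceFirst M)ᴴ := by
  ext a b
  simp [ptraceFirst]

theorem ptraceFirst_apply_eq_sum_cons (M : Matrix (Fin (n + 1) → Fin d) (Fin (n + 1) → Fin d) ℂ)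
    (a b : Fin d) :
    ptraceFirst M a b = ∑ r : Fin n → Fin d, M (Fin.cons a r) (Fin.cons b r) := by
  let tail : Fin n ≃ {i : Fin (n + 1) // i.val ≠ 0} :=
    (finSuccAboveEquiv 0).trans (Equiv.subtypeEquivRight fun _ ↦ Fin.val_ne_zero_iff.symm)
  have dite_eq_cons (c : Fin d) (r : {i : Fin (n + 1) // i.val ≠ 0} → Fin d) :
      (fun m ↦ if h : m.val = 0 then c else r ⟨m, h⟩) =
        (Fin.cons c (r ∘ tail) : Fin (n + 1) → Fin d) := by
    funext m
    cases m using Fin.cases <;> rfl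
  simp only [ptraceFirst, dite_eq_cons]
  exact (tail.symm.arrowCongr (Equiv.refl (Fin d))).sum_comp
    fun r ↦ M (Fin.cons a r) (Fin.cons b r)

variable (A : Fin (n + 1) → Matrix (Fin d) (Fin d) ℂ)

theorem ptraceFirst_tensOp :
    ptraceFirst (tensOp A) = (∏ i : Fin n, (A i.succ).trace) • A 0 := by
  ext a b
  simp only [ptraceFirst_apply_eq_sum_cons, tensOp, Fin.prod_univ_succ, Fin.cons_zero,
    Fin.cons_succ, ← Finset.mul_sum, Matrix.smul_apply, smul_eq_mul, trace, diag_apply,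
    Fintype.prod_sum]
  exact mul_comm _ _

theorem ptraceFirst_tensOp_mul_conjTranspose_cyc :
    ptraceFirst (tensOp A * (cyc d (n + 1))ᴴ) = (List.ofFn A).prod := by
  ext a b
  simp only [ptraceFirst_apply_eq_sum_cons, mul_conjTranspose_cyc, submatrix_apply, id, tensOp,
    list_ofFn_prod_apply_eq_sum_prod, Fin.snoc_eq_cons_rotate, Function.comp_apply]

theorem ptraceFirst_cyc_mul_tensOp :
    ptraceFirst (cyc d (n + 1) * tensOp A) = (List.ofFn A).reverse.prod := by
  calc ptraceFirst (cyc d (n + 1) * tensOp A)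
      = (ptraceFirst (tensOp (fun m ↦ (A m)ᴴ) * (cyc d (n + 1))ᴴ))ᴴ := by
        rw [← conjTranspose_tensOp, ← conjTranspose_mul, ptraceFirst_conjTranspose,
          conjTranspose_conjTranspose]
    _ = (List.ofFn A).reverse.prod := by
        rw [ptraceFirst_tensOp_mul_conjTranspose_cyc, conjTranspose_list_prod, List.map_ofFn]
        simp [Function.comp_def]

end PartialTrace

theorem stmt6_general (d n : ℕ) (σ : Matrix (Fin d) (Fin d) ℂ) :
    ptraceFirst (Dk d (n + 1) * tensOp (fun _ : Fin (n + 1) ↦ σ) * (Dk d (n + 1))ᴴ) =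
      (1 / 2 : ℂ) • (σ.trace ^ n • σ + σ ^ (n + 1)) := by
  simp only [Dk_mul_mul_conjTranspose_Dk, ptraceFirst_smul, ptraceFirst_add,
    cyc_mul_tensOp_mul_conjTranspose_cyc, ptraceFirst_tensOp, ptraceFirst_cyc_mul_tensOp,
    ptraceFirst_tensOp_mul_conjTranspose_cyc, Function.comp_apply, List.ofFn_const,
    List.reverse_replicate, List.prod_replicate, Fin.prod_const]
  module

/-- For a Hermitian `σ` with `tr σ = 1`, the partial trace over the
last `k-1` factors of `D_k σ^{⊗k} D_k†` equals `(σ + σ^k)/2`. -/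
theorem stmt6 (d k : ℕ) (hd : 2 ≤ d) (hk : 2 ≤ k)
    (σ : Matrix (Fin d) (Fin d) ℂ) (hherm : σ.IsHermitian) (htr : σ.trace = 1) :
    ptraceFirst (Dk d k * tensOp (fun _ : Fin k => σ) * (Dk d k)ᴴ)
      = (1 / 2 : ℂ) • (σ + σ ^ k) := by
  obtain ⟨n, rfl⟩ : ∃ n, k = n + 1 := ⟨k - 1, by omega⟩
  simpa only [htr, one_pow, one_smul] using stmt6_general d n σ
end
end

section
/- Let d ≥ 2, k ≥ 2, 1 ≤ t ≤ k−1, λ ∈ [0,1), and 0 < ε < 1/2. Define the conditional fidelity of an unmeasured copy after a passed collective test as F = [(1−ε)(1 − (1−λ)ε)^t + (1−ε)^k] / [(1 − (1−λ)ε)^t + (1−ε)^k + λ^t ε^k/(d−1)^{k−1}]. Then F > 1 − ε; that is, the output infidelity 1 − F is strictly smaller than the input infidelity ε. -/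
open BigOperators

/-!
The numerator of the conditional fidelity is `(1 - ε) * a + b` and its denominator is `a + b + x`,
so comparing it with `1 - ε` eliminates `a`: what remains is to compare the all-error term
`(1 - ε) * x` with the error-free term `ε * b`. After cancelling `ε * (1 - ε)` this is a comparison
of the `(k - 1)`-th powers of `ε` and `(d - 1) * (1 - ε)`, the former damped by `lam ^ t`; the bases
are in the right order as soon as the input fidelity exceeds that of the maximally mixed state,
`1 / d < 1 - ε`.
-/

section ConditionalFidelity

variable {𝕜 : Type*} [Field 𝕜] [LinearOrder 𝕜] [IsStrictOrderedRing 𝕜]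

lemma lt_mul_add_div_add_add_iff {a b x c : 𝕜} (h : 0 < a + b + x) :
    c < (c * a + b) / (a + b + x) ↔ c * x < (1 - c) * b := by
  have hdiff : c * a + b - c * (a + b + x) = (1 - c) * b - c * x := by ring
  rw [lt_div_iff₀ h, ← sub_pos, hdiff, sub_pos]

/-- The fidelity of an unmeasured copy conditioned on the `t` measured ones passing, for `k` copies
of a white-noise state of infidelity `ε` in dimension `d` and a homogeneous verification operator
whose second largest eigenvalue is `lam`. The dimension is a field element, as only `d - 1` enters;
the exponent `k - 1` is truncated at `k = 0`. -/
def conditionalFidelity (d : 𝕜) (k t : ℕ) (lam ε : 𝕜) : 𝕜 :=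
  ((1 - ε) * (1 - (1 - lam) * ε) ^ t + (1 - ε) ^ k) /
    ((1 - (1 - lam) * ε) ^ t + (1 - ε) ^ k + lam ^ t * ε ^ k / (d - 1) ^ (k - 1))

lemma one_sub_lt_conditionalFidelity_iff {d lam ε : 𝕜} {k : ℕ} (t : ℕ) (hd : 1 < d) (hk : k ≠ 0)
    (hlam : 0 ≤ lam) (hε0 : 0 < ε) (hε1 : ε < 1) :
    1 - ε < conditionalFidelity d k t lam ε ↔
      lam ^ t * ε ^ (k - 1) < ((d - 1) * (1 - ε)) ^ (k - 1) := by
  obtain ⟨n, rfl⟩ := Nat.exists_eq_add_one_of_ne_zero hk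
  have hd' : 0 < d - 1 := sub_pos.2 hd
  have hε' : 0 < 1 - ε := sub_pos.2 hε1
  have hpass : 0 < 1 - (1 - lam) * ε :=
    calc 0 < (1 - ε) + lam * ε := by positivity
      _ = 1 - (1 - lam) * ε := by ring
  rw [conditionalFidelity, lt_mul_add_div_add_add_iff (by positivity), Nat.add_sub_cancel]
  calc (1 - ε) * (lam ^ t * ε ^ (n + 1) / (d - 1) ^ n) < (1 - (1 - ε)) * (1 - ε) ^ (n + 1)
      ↔ ε * (1 - ε) * (lam ^ t * ε ^ n / (d - 1) ^ n) < ε * (1 - ε) * (1 - ε) ^ n := by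
        ring_nf
    _ ↔ lam ^ t * ε ^ n / (d - 1) ^ n < (1 - ε) ^ n :=
        mul_lt_mul_iff_right₀ (mul_pos hε0 hε')
    _ ↔ lam ^ t * ε ^ n < ((d - 1) * (1 - ε)) ^ n := by
        rw [div_lt_iff₀' (pow_pos hd' n), mul_pow]

lemma lt_sub_one_mul_one_sub {d ε : 𝕜} (hd : 0 < d) (hε : ε < 1 - 1 / d) :
    ε < (d - 1) * (1 - ε) := by
  have h : 1 < (1 - ε) * d := (div_lt_iff₀ hd).1 (lt_sub_comm.1 hε)
  linarith

theorem stmt10_general {d lam ε : 𝕜} {k : ℕ} (t : ℕ) (hd : 0 < d) (hk : 2 ≤ k)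
    (hlam0 : 0 ≤ lam) (hlam1 : lam ≤ 1) (hε0 : 0 < ε) (hε : ε < 1 - 1 / d) :
    1 - ε < conditionalFidelity d k t lam ε := by
  have hε1 : ε < 1 := hε.trans (sub_lt_self 1 (one_div_pos.2 hd))
  have hd1 : 1 < d := (div_lt_one hd).1 (sub_pos.1 (hε0.trans hε))
  rw [one_sub_lt_conditionalFidelity_iff t hd1 (by lia) hlam0 hε0 hε1]
  calc lam ^ t * ε ^ (k - 1) ≤ ε ^ (k - 1) :=
        mul_le_of_le_one_left (pow_nonneg hε0.le _) (pow_le_one₀ hlam0 hlam1)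
    _ < ((d - 1) * (1 - ε)) ^ (k - 1) :=
        pow_lt_pow_left₀ (lt_sub_one_mul_one_sub hd hε) hε0.le (by lia)

end ConditionalFidelity

/-- the conditional fidelity
`F = [(1−ε)(1−(1−λ)ε)^t + (1−ε)^k] / [(1−(1−λ)ε)^t + (1−ε)^k + λ^t ε^k/(d−1)^{k−1}]`
of an unmeasured copy after a passed collective test satisfies `F > 1 − ε`, i.e.
the output infidelity `1 − F` is strictly smaller than the input infidelity `ε`. -/
theorem stmt10 (d k t : ℕ) (hd : 2 ≤ d) (hk : 2 ≤ k) (ht1 : 1 ≤ t) (ht2 : t ≤ k - 1)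
    (lam ε : ℝ) (hlam0 : 0 ≤ lam) (hlam1 : lam < 1) (hε0 : 0 < ε) (hε1 : ε < 1 / 2)
    (F : ℝ)
    (hF : F = ((1 - ε) * (1 - (1 - lam) * ε) ^ t + (1 - ε) ^ k) /
      ((1 - (1 - lam) * ε) ^ t + (1 - ε) ^ k
        + lam ^ t * ε ^ k / ((d : ℝ) - 1) ^ (k - 1))) :
    F > 1 - ε := by
  have hd' : (2 : ℝ) ≤ d := mod_cast hd
  have hε : ε < 1 - 1 / (d : ℝ) := by linarith [one_div_le_one_div_of_le two_pos hd']
  exact hF ▸ stmt10_general t (by linarith) hk hlam0 hlam1.le hε0 hε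
end

section
/- Let d ≥ 2, k ≥ 2, 1 ≤ t ≤ k, let ψ, ψ⊥ ∈ ℂ^d be orthonormal vectors, let Ω = |ψ⟩⟨ψ| + λ(I − |ψ⟩⟨ψ|) with λ ∈ [0,1), and for ε ∈ [0,1] let ψ_ε = √(1−ε)·ψ + √ε·ψ⊥ (the unitarily rotated target state). With S_k the cyclic-shift unitary on (ℂ^d)^{⊗k} and D_k = (I + S_k)/2, the passing probability satisfies tr[(Ω^{⊗t} ⊗ I^{⊗(k−t)}) · D_k (|ψ_ε⟩⟨ψ_ε|)^{⊗k} D_k†] = (1 − (1−λ)ε)^t. -/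
open Matrix Kronecker BigOperators

noncomputable section

/-!
The product state `φ ⊗ ⋯ ⊗ φ` of identical copies is fixed by the cyclic shift, hence by `D_k`, so
the SWAP projection leaves it unchanged. What remains is the trace of a tensor product: each of the
first `t` factors contributes `⟨φ|Ω|φ⟩` and the others contribute `⟨φ|φ⟩ = 1`. Since `Ω` is the
combination `(1 - λ) |ψ⟩⟨ψ| + λ I`, the first number depends on `φ` only through its overlap with
`ψ`, and the overlap of `ψ_ε` with `ψ` is `√(1 - ε)`.
-/

section TensorPowers

variable {d k : ℕ}

lemma tensOp_mul_tensOp (A B : Fin k → Matrix (Fin d) (Fin d) ℂ) :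
    tensOp A * tensOp B = tensOp (fun m => A m * B m) := by
  ext g f
  simp only [tensOp, mul_apply, ← Finset.prod_mul_distrib]
  exact (Fintype.prod_sum fun m j => A m (g m) j * B m j (f m)).symm

lemma trace_tensOp (A : Fin k → Matrix (Fin d) (Fin d) ℂ) :
    (tensOp A).trace = ∏ m, (A m).trace :=
  (Fintype.prod_sum fun m j => A m j j).symm

lemma star_tensVec (v : Fin k → Fin d → ℂ) :
    star (tensVec v) = tensVec (fun m => star (v m)) :=
  funext fun f => star_prod Finset.univ fun m => v m (f m)

lemma tensOp_vecMulVec (v w : Fin k → Fin d → ℂ) :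
    tensOp (fun m => vecMulVec (v m) (w m)) = vecMulVec (tensVec v) (tensVec w) := by
  ext g f
  simp only [tensOp, tensVec, vecMulVec_apply, Finset.prod_mul_distrib]

lemma trace_tensOp_ite_mul_tensOp_const {t : ℕ} (ht : t ≤ k) (A : Matrix (Fin d) (Fin d) ℂ)
    {B : Matrix (Fin d) (Fin d) ℂ} (hB : B.trace = 1) :
    (tensOp (fun m : Fin k => if m.val < t then A else 1) * tensOp (fun _ : Fin k => B)).trace
      = (A * B).trace ^ t :=
  calc
    _ = ∏ m : Fin k, if m.val < t then (A * B).trace else 1 := by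
      simp only [tensOp_mul_tensOp, trace_tensOp, ite_mul, one_mul, apply_ite trace, hB]
    _ = (A * B).trace ^ t := by
      rw [Finset.prod_ite, Finset.prod_const_one, mul_one, Finset.prod_const,
        Fin.card_filter_val_lt, min_eq_right ht]

end TensorPowers

section CyclicShift

variable {d k : ℕ}

lemma prevIdx_bijective : Function.Bijective (prevIdx : Fin k → Fin k) := by
  refine Finite.injective_iff_bijective.mp fun a b hab => ?_
  have hmod : a.val ≡ b.val [MOD k] :=
    Nat.ModEq.add_right_cancel' (k - 1) (congrArg Fin.val hab)
  exact Fin.ext (hmod.eq_of_lt_of_lt a.isLt b.isLt)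

lemma cyc_mulVec_apply_comp_prevIdx (x : (Fin k → Fin d) → ℂ) (f : Fin k → Fin d) :
    (cyc d k *ᵥ x) (f ∘ prevIdx) = x f := by
  have comp_inj (f' : Fin k → Fin d) : f ∘ prevIdx = f' ∘ prevIdx ↔ f = f' :=
    prevIdx_bijective.surjective.injective_comp_right.eq_iff
  calc
    _ = ∑ f' : Fin k → Fin d, (if f ∘ prevIdx = f' ∘ prevIdx then 1 else 0) * x f' := rfl
    _ = x f := by simp [comp_inj]

lemma cyc_mulVec_tensVec (v : Fin k → Fin d → ℂ) :
    cyc d k *ᵥ tensVec v = tensVec (v ∘ prevIdx) := by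
  funext g
  obtain ⟨f, rfl⟩ := prevIdx_bijective.comp_right.surjective g
  rw [cyc_mulVec_apply_comp_prevIdx]
  exact (prevIdx_bijective.prod_comp fun m => v m (f m)).symm

lemma Dk_mulVec_tensVec_const (v : Fin d → ℂ) :
    Dk d k *ᵥ tensVec (fun _ => v) = tensVec (fun _ => v) := by
  have hcyc : cyc d k *ᵥ tensVec (fun _ => v) = tensVec (fun _ => v) := cyc_mulVec_tensVec _
  rw [Dk, smul_mulVec, add_mulVec, one_mulVec, hcyc, ← two_smul ℂ, smul_smul,
    one_div_mul_cancel two_ne_zero, one_smul]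

lemma Dk_mul_tensOp_const_mul_conjTranspose (v : Fin d → ℂ) :
    Dk d k * tensOp (fun _ => vecMulVec v (star v)) * (Dk d k)ᴴ
      = tensOp (fun _ => vecMulVec v (star v)) := by
  rw [tensOp_vecMulVec, ← star_tensVec, mul_vecMulVec, vecMulVec_mul, ← star_mulVec,
    Dk_mulVec_tensVec_const]

lemma trace_tensOp_ite_mul_Dk_conj {t : ℕ} (ht : t ≤ k) (A : Matrix (Fin d) (Fin d) ℂ)
    {φ : Fin d → ℂ} (hφ : star φ ⬝ᵥ φ = 1) :
    (tensOp (fun m : Fin k => if m.val < t then A else 1)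
        * (Dk d k * tensOp (fun _ : Fin k => vecMulVec φ (star φ)) * (Dk d k)ᴴ)).trace
      = (A * vecMulVec φ (star φ)).trace ^ t := by
  rw [Dk_mul_tensOp_const_mul_conjTranspose, trace_tensOp_ite_mul_tensOp_const ht]
  rwa [trace_vecMulVec, dotProduct_comm]

end CyclicShift

section Superposition

variable {n R : Type*} [Fintype n] [CommSemiring R] [StarRing R] {ψ φ : n → R}

lemma star_dotProduct_superposition (hψ : star ψ ⬝ᵥ ψ = 1) (horth : star ψ ⬝ᵥ φ = 0) (a b : R) :
    star ψ ⬝ᵥ (a • ψ + b • φ) = a := by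
  simp only [dotProduct_add, dotProduct_smul, hψ, horth, smul_eq_mul, mul_one, mul_zero, add_zero]

lemma star_superposition_dotProduct_self (hψ : star ψ ⬝ᵥ ψ = 1) (hφ : star φ ⬝ᵥ φ = 1)
    (horth : star ψ ⬝ᵥ φ = 0) (a b : R) :
    star (a • ψ + b • φ) ⬝ᵥ (a • ψ + b • φ) = star a * a + star b * b := by
  have horth' : star φ ⬝ᵥ ψ = 0 := by rw [star_dotProduct, horth, star_zero]
  have hoverlap : star φ ⬝ᵥ (a • ψ + b • φ) = b := by
    rw [add_comm, star_dotProduct_superposition hφ horth']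
  rw [star_add, star_smul, star_smul, add_dotProduct, smul_dotProduct, smul_dotProduct,
    star_dotProduct_superposition hψ horth, hoverlap, smul_eq_mul, smul_eq_mul]

end Superposition

/-- The homogeneous verification operator `|ψ⟩⟨ψ| + c (I - |ψ⟩⟨ψ|)` for the target `ψ`, with an
arbitrary scalar `c` in the role of the parameter `λ`. -/
def homogeneousOp {n R : Type*} [DecidableEq n] [CommRing R] [StarRing R] (ψ : n → R) (c : R) :
    Matrix n n R :=
  vecMulVec ψ (star ψ) + c • (1 - vecMulVec ψ (star ψ))

lemma trace_homogeneousOp_mul_vecMulVec {n R : Type*} [Fintype n] [DecidableEq n] [CommRing R]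
    [StarRing R] (ψ v w : n → R) (c : R) :
    (homogeneousOp ψ c * vecMulVec v w).trace
      = (1 - c) * ((star ψ ⬝ᵥ v) * (w ⬝ᵥ ψ)) + c * (w ⬝ᵥ v) := by
  have hproj : (vecMulVec ψ (star ψ) * vecMulVec v w).trace = (star ψ ⬝ᵥ v) * (w ⬝ᵥ ψ) := by
    rw [vecMulVec_mul_vecMulVec, trace_vecMulVec, dotProduct_comm, smul_dotProduct, smul_eq_mul]
  rw [homogeneousOp, add_mul, smul_mul, sub_mul, one_mul, trace_add, trace_smul, trace_sub, hproj,
    trace_vecMulVec, dotProduct_comm v w, smul_eq_mul]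
  ring

section RotatedState

variable {n : Type*} {ψ ψp : n → ℂ} {ε : ℝ}

/-- The unitarily rotated target state `ψ_ε = √(1 - ε) ψ + √ε ψ⊥`, of infidelity `ε` when `ψ` and
`ψp` (the paper's `ψ⊥`) are orthonormal and `0 ≤ ε ≤ 1`. -/
def rotatedState (ψ ψp : n → ℂ) (ε : ℝ) : n → ℂ :=
  ((Real.sqrt (1 - ε) : ℝ) : ℂ) • ψ + ((Real.sqrt ε : ℝ) : ℂ) • ψp

lemma star_ofReal_sqrt_mul_self {x : ℝ} (hx : 0 ≤ x) :
    star (Real.sqrt x : ℂ) * (Real.sqrt x : ℂ) = x := by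
  rw [Complex.star_def, Complex.conj_ofReal, ← Complex.ofReal_mul, Real.mul_self_sqrt hx]

variable [Fintype n]

lemma star_rotatedState_dotProduct_self (hψ : star ψ ⬝ᵥ ψ = 1) (hψp : star ψp ⬝ᵥ ψp = 1)
    (horth : star ψ ⬝ᵥ ψp = 0) (hε0 : 0 ≤ ε) (hε1 : ε ≤ 1) :
    star (rotatedState ψ ψp ε) ⬝ᵥ rotatedState ψ ψp ε = 1 := by
  rw [rotatedState, star_superposition_dotProduct_self hψ hψp horth,
    star_ofReal_sqrt_mul_self (sub_nonneg.mpr hε1), star_ofReal_sqrt_mul_self hε0,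
    ← Complex.ofReal_add, sub_add_cancel, Complex.ofReal_one]

lemma star_dotProduct_rotatedState_mul_star (hψ : star ψ ⬝ᵥ ψ = 1) (horth : star ψ ⬝ᵥ ψp = 0)
    (hε1 : ε ≤ 1) :
    (star ψ ⬝ᵥ rotatedState ψ ψp ε) * (star (rotatedState ψ ψp ε) ⬝ᵥ ψ) = 1 - ε := by
  have hoverlap : star ψ ⬝ᵥ rotatedState ψ ψp ε = (Real.sqrt (1 - ε) : ℂ) :=
    star_dotProduct_superposition hψ horth _ _
  rw [star_dotProduct (rotatedState ψ ψp ε), hoverlap, mul_comm,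
    star_ofReal_sqrt_mul_self (sub_nonneg.mpr hε1), Complex.ofReal_sub, Complex.ofReal_one]

lemma trace_homogeneousOp_mul_rotatedState [DecidableEq n] (hψ : star ψ ⬝ᵥ ψ = 1)
    (hψp : star ψp ⬝ᵥ ψp = 1) (horth : star ψ ⬝ᵥ ψp = 0) (c : ℂ) (hε0 : 0 ≤ ε) (hε1 : ε ≤ 1) :
    (homogeneousOp ψ c * vecMulVec (rotatedState ψ ψp ε) (star (rotatedState ψ ψp ε))).trace
      = 1 - (1 - c) * ε := by
  rw [trace_homogeneousOp_mul_vecMulVec, star_dotProduct_rotatedState_mul_star hψ horth hε1,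
    star_rotatedState_dotProduct_self hψ hψp horth hε0 hε1]
  ring

end RotatedState

theorem stmt15_general {d k t : ℕ} (ht : t ≤ k) {ψ ψp : Fin d → ℂ} (hψ : star ψ ⬝ᵥ ψ = 1)
    (hψp : star ψp ⬝ᵥ ψp = 1) (horth : star ψ ⬝ᵥ ψp = 0) (c : ℂ) {ε : ℝ} (hε0 : 0 ≤ ε)
    (hε1 : ε ≤ 1) :
    (tensOp (fun m : Fin k => if m.val < t then homogeneousOp ψ c else 1)
        * (Dk d k * tensOp (fun _ : Fin k =>
            vecMulVec (rotatedState ψ ψp ε) (star (rotatedState ψ ψp ε))) * (Dk d k)ᴴ)).trace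
      = (1 - (1 - c) * ε) ^ t := by
  have hunit := star_rotatedState_dotProduct_self hψ hψp horth hε0 hε1
  rw [trace_tensOp_ite_mul_Dk_conj ht _ hunit,
    trace_homogeneousOp_mul_rotatedState hψ hψp horth c hε0 hε1]

/-- for the unitarily rotated target state
`ψ_ε = √(1−ε)·ψ + √ε·ψ⊥`, the passing probability is
`tr[(Ω^{⊗t} ⊗ I^{⊗(k−t)}) · D_k (|ψ_ε⟩⟨ψ_ε|)^{⊗k} D_k†] = (1−(1−λ)ε)^t`. -/
theorem stmt15 (d k t : ℕ) (hd : 2 ≤ d) (hk : 2 ≤ k) (ht1 : 1 ≤ t) (ht2 : t ≤ k)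
    (ψ ψp : Fin d → ℂ) (hψ : star ψ ⬝ᵥ ψ = 1) (hψp : star ψp ⬝ᵥ ψp = 1)
    (horth : star ψ ⬝ᵥ ψp = 0)
    (lam ε : ℝ) (hlam0 : 0 ≤ lam) (hlam1 : lam < 1) (hε0 : 0 ≤ ε) (hε1 : ε ≤ 1)
    (Ω : Matrix (Fin d) (Fin d) ℂ)
    (hΩ : Ω = vecMulVec ψ (star ψ) + (lam : ℂ) • (1 - vecMulVec ψ (star ψ)))
    (ψε : Fin d → ℂ)
    (hψε : ψε = ((Real.sqrt (1 - ε) : ℝ) : ℂ) • ψ + ((Real.sqrt ε : ℝ) : ℂ) • ψp) :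
    (tensOp (fun m : Fin k => if m.val < t then Ω else 1)
        * (Dk d k * tensOp (fun _ : Fin k => vecMulVec ψε (star ψε)) * (Dk d k)ᴴ)).trace
      = (((1 - (1 - lam) * ε) ^ t : ℝ) : ℂ) := by
  subst hΩ hψε
  exact_mod_cast stmt15_general ht2 hψ hψp horth (lam : ℂ) hε0 hε1
end
end
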